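/- Let T : ℝ^d → ℝ^d be γ-contractive with respect to a norm ‖·‖_c with fixed point θ*, g∘F decomposable at θ* (with maps g : ℝ^m → ℝ^d and F), let (w_t) be i.i.d. zero-mean with E‖w₀‖⁴ < ∞, and let ν be the probability measure with finite second moment such that W₂(ν_α, ν) → 0 as α → 0⁺, where ν_α is the pushforward of the stationary distribution μ_α under x ↦ (x − θ*)/√α. Then: (1) if g is differentiable on a neighborhood of 0 with derivative continuous at 0, or if the derivative ∇F(0) is the zero map, then ∫y dν(y) = 0; (2) if the covariance matrix Var(w₀) is positive definite and there exists an index i ∈ {1,…,d} such that either the set { z ∈ ℝ^d : g_i(∇F(0)x) ≥ ⟨z, x⟩ for all x ∈ ℝ^d } or the set { z ∈ ℝ^d : g_i(∇F(0)x) ≤ ⟨z, x⟩ for all x ∈ ℝ^d } contains two distinct elements, then ∫y dν(y) ≠ 0. -/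

import Mathlib

open MeasureTheory ProbabilityTheory Filter Topology

noncomputable section

/-- A function on `ℝ^d` satisfying the axioms of a norm. -/
structure IsNormLike {V : Type*} [AddCommGroup V] [Module ℝ V] (c : V → ℝ) : Prop where
  add_le : ∀ x y, c (x + y) ≤ c x + c y
  smul_eq : ∀ (r : ℝ) (x : V), c (r • x) = |r| * c x
  pos : ∀ x, x ≠ 0 → 0 < c x

/-- `π` is a coupling of `μ` and `ν`. -/
def IsCoupling {X : Type*} [MeasurableSpace X] (π : Measure (X × X)) (μ ν : Measure X) : Prop :=
  π.map Prod.fst = μ ∧ π.map Prod.snd = ν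

/-- Squared Wasserstein-2 distance with respect to the norm-like function `c`. -/
def W2sq {X : Type*} [MeasurableSpace X] [AddGroup X] (c : X → ℝ) (μ ν : Measure X) : ℝ :=
  sInf { r : ℝ | ∃ π : Measure (X × X), IsCoupling π μ ν ∧
    Integrable (fun p => (c (p.1 - p.2)) ^ 2) π ∧ r = ∫ p, (c (p.1 - p.2)) ^ 2 ∂π }

/-- Wasserstein-2 distance with respect to the norm-like function `c`. -/
def W2dist {X : Type*} [MeasurableSpace X] [AddGroup X] (c : X → ℝ) (μ ν : Measure X) : ℝ :=
  Real.sqrt (W2sq c μ ν)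

/-- One step of the SA Markov kernel with stepsize `α` and noise distribution `νw`,
at the level of laws. -/
def saStep {d : ℕ} (T : EuclideanSpace ℝ (Fin d) → EuclideanSpace ℝ (Fin d)) (α : ℝ)
    (νw : Measure (EuclideanSpace ℝ (Fin d))) (μ : Measure (EuclideanSpace ℝ (Fin d))) :
    Measure (EuclideanSpace ℝ (Fin d)) :=
  Measure.map (fun p => p.1 + α • (T p.1 - p.1 + p.2)) (μ.prod νw)

section Norms

variable {ι : Type*} [Fintype ι]

theorem IsNormLike.map_zero {V : Type*} [AddCommGroup V] [Module ℝ V] {c : V → ℝ}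
    (hc : IsNormLike c) : c 0 = 0 := by
  simpa using hc.smul_eq 0 0

theorem IsNormLike.nonneg {V : Type*} [AddCommGroup V] [Module ℝ V] {c : V → ℝ}
    (hc : IsNormLike c) (x : V) : 0 ≤ c x := by
  rcases eq_or_ne x 0 with rfl | hx
  · exact hc.map_zero.ge
  · exact (hc.pos x hx).le

theorem IsNormLike.exists_le_norm {c : EuclideanSpace ℝ ι → ℝ} (hc : IsNormLike c) :
    ∃ b > 0, ∀ x, c x ≤ b * ‖x‖ := by
  classical
  refine ⟨∑ i, c (EuclideanSpace.single i 1) + 1, ?_, fun x => ?_⟩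
  · have := Finset.sum_nonneg fun i (_ : i ∈ Finset.univ) =>
      hc.nonneg (EuclideanSpace.single i (1 : ℝ))
    linarith
  have hx : x = ∑ i, x i • EuclideanSpace.single i (1 : ℝ) := by
    ext j
    simp [Finset.sum_apply, Pi.single_apply]
  have hsum : c (∑ i, x i • EuclideanSpace.single i (1 : ℝ)) ≤
      ∑ i, c (x i • EuclideanSpace.single i (1 : ℝ)) :=
    Finset.le_sum_of_subadditive c hc.map_zero.le hc.add_le _ _
  calc c x ≤ ∑ i, c (x i • EuclideanSpace.single i (1 : ℝ)) := by
        conv_lhs => rw [hx]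
        exact hsum
    _ ≤ ∑ i, c (EuclideanSpace.single i 1) * ‖x‖ := by
        refine Finset.sum_le_sum fun i _ => ?_
        rw [hc.smul_eq, mul_comm]
        exact mul_le_mul_of_nonneg_left (PiLp.norm_apply_le x i) (hc.nonneg _)
    _ ≤ _ := by
        rw [← Finset.sum_mul]
        nlinarith [norm_nonneg x]

theorem IsNormLike.continuous {c : EuclideanSpace ℝ ι → ℝ} (hc : IsNormLike c) :
    Continuous c := by
  obtain ⟨b, -, hb⟩ := hc.exists_le_norm
  refine (LipschitzWith.of_le_add_mul' b fun x y => ?_).continuous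
  have h := hc.add_le y (x - y)
  rw [add_sub_cancel] at h
  rw [dist_eq_norm]
  linarith [hb (x - y)]

theorem IsNormLike.exists_norm_le {c : EuclideanSpace ℝ ι → ℝ} (hc : IsNormLike c) :
    ∃ a > 0, ∀ x, ‖x‖ ≤ a * c x := by
  rcases (Metric.sphere (0 : EuclideanSpace ℝ ι) 1).eq_empty_or_nonempty with he | hne
  · refine ⟨1, one_pos, fun x => ?_⟩
    rcases eq_or_ne x 0 with rfl | hx
    · simp [hc.map_zero]
    · have : ‖x‖⁻¹ • x ∈ Metric.sphere (0 : EuclideanSpace ℝ ι) 1 := by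
        simp [norm_smul, hx]
      simp [he] at this
  · obtain ⟨u, hu, hmin⟩ := (isCompact_sphere (0 : EuclideanSpace ℝ ι) 1).exists_isMinOn hne
      hc.continuous.continuousOn
    have hu0 : u ≠ 0 := by
      rintro rfl
      simp at hu
    have hcu := hc.pos u hu0
    refine ⟨(c u)⁻¹, inv_pos.2 hcu, fun x => ?_⟩
    rcases eq_or_ne x 0 with rfl | hx
    · simp [hc.map_zero]
    · have hmem : ‖x‖⁻¹ • x ∈ Metric.sphere (0 : EuclideanSpace ℝ ι) 1 := by
        simp [norm_smul, hx]
      have h : c u ≤ c (‖x‖⁻¹ • x) := hmin hmem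
      have hxn := norm_pos_iff.2 hx
      rw [hc.smul_eq, abs_of_pos (inv_pos.2 hxn), inv_mul_eq_div, le_div_iff₀ hxn] at h
      rw [inv_mul_eq_div, le_div_iff₀ hcu]
      linarith

end Norms

section Moments

variable {E : Type*} [NormedAddCommGroup E] [MeasurableSpace E]
  [BorelSpace E] [SecondCountableTopology E]

theorem integrable_of_norm_le_one_add_sq {X G : Type*} [MeasurableSpace X] [NormedAddCommGroup G]
    {ρ : Measure X} [IsFiniteMeasure ρ] {q : X → ℝ} (hq : Integrable q ρ) {f : X → G}
    (hf : AEStronglyMeasurable f ρ) (K : ℝ) (h : ∀ x, ‖f x‖ ≤ K * (1 + q x)) :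
    Integrable f ρ :=
  (((integrable_const (1 : ℝ)).add hq).const_mul K).mono' hf (ae_of_all _ h)

theorem integrable_id_of_sq {ρ : Measure E} [IsFiniteMeasure ρ]
    (h2 : Integrable (fun x : E => ‖x‖ ^ 2) ρ) : Integrable (fun x : E => x) ρ :=
  integrable_of_norm_le_one_add_sq h2 continuous_id.aestronglyMeasurable 1 fun x => by
    nlinarith [sq_nonneg (‖x‖ - 1), norm_nonneg x]

/-- Between square-integrable laws, any cost above `W2sq` is beaten by some coupling. -/
theorem exists_coupling_lt_of_W2sq_lt {ι : Type*} [Fintype ι]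
    {c : EuclideanSpace ℝ ι → ℝ} (hc : IsNormLike c)
    {μ ν : Measure (EuclideanSpace ℝ ι)} [IsProbabilityMeasure μ] [IsProbabilityMeasure ν]
    (hμ : Integrable (fun x : EuclideanSpace ℝ ι => ‖x‖ ^ 2) μ)
    (hν : Integrable (fun x : EuclideanSpace ℝ ι => ‖x‖ ^ 2) ν) {r : ℝ} (hr : W2sq c μ ν < r) :
    ∃ π : Measure (EuclideanSpace ℝ ι × EuclideanSpace ℝ ι), IsCoupling π μ ν ∧
      Integrable (fun p => (c (p.1 - p.2)) ^ 2) π ∧ ∫ p, (c (p.1 - p.2)) ^ 2 ∂π < r := by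
  obtain ⟨b, hb, hcb⟩ := hc.exists_le_norm
  have hne : { r : ℝ | ∃ π : Measure (EuclideanSpace ℝ ι × EuclideanSpace ℝ ι),
      IsCoupling π μ ν ∧ Integrable (fun p => (c (p.1 - p.2)) ^ 2) π ∧
      r = ∫ p, (c (p.1 - p.2)) ^ 2 ∂π }.Nonempty := by
    refine ⟨_, μ.prod ν, ⟨?_, ?_⟩, ?_, rfl⟩
    · simp
    · simp
    · have hcm : Continuous fun p : EuclideanSpace ℝ ι × EuclideanSpace ℝ ι =>
          (c (p.1 - p.2)) ^ 2 := (hc.continuous.comp (by fun_prop)).pow 2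
      refine integrable_of_norm_le_one_add_sq ((hμ.comp_fst ν).add (hν.comp_snd μ))
        hcm.aestronglyMeasurable (2 * b ^ 2) fun p => ?_
      have h1 := hcb (p.1 - p.2)
      have h2 := norm_sub_le p.1 p.2
      have h0 := hc.nonneg (p.1 - p.2)
      have h3 : c (p.1 - p.2) ≤ b * (‖p.1‖ + ‖p.2‖) := h1.trans (by gcongr)
      rw [Real.norm_of_nonneg (by positivity)]
      calc c (p.1 - p.2) ^ 2 ≤ (b * (‖p.1‖ + ‖p.2‖)) ^ 2 := by gcongr
        _ ≤ 2 * b ^ 2 * (1 + (‖p.1‖ ^ 2 + ‖p.2‖ ^ 2)) := by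
          nlinarith [mul_nonneg (sq_nonneg b) (sq_nonneg (‖p.1‖ - ‖p.2‖)), sq_nonneg b]
  obtain ⟨r', ⟨π, hπ, hi, rfl⟩, hlt⟩ := exists_lt_of_csInf_lt hne hr
  exact ⟨π, hπ, hi, hlt⟩

end Moments

section Stationary

variable {E : Type*} [NormedAddCommGroup E] [InnerProductSpace ℝ E] [MeasurableSpace E]
  [BorelSpace E] [SecondCountableTopology E] {ρ νw : Measure E}
  [IsProbabilityMeasure ρ] [IsProbabilityMeasure νw] {h : E → E} {K s : ℝ}

/-- The mean drift vanishes under a stationary law of `y ↦ y + s² h(y) + s w`. -/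
theorem integral_drift_eq_zero [CompleteSpace E] (hh : Continuous h) (hK : ∀ y, ‖h y‖ ≤ K * ‖y‖)
    (hs : s ≠ 0) (hρ : Integrable (fun y : E => y) ρ) (hw : Integrable (fun y : E => y) νw)
    (hmean : ∫ w, w ∂νw = 0)
    (hstat : (ρ.prod νw).map (fun p => p.1 + s ^ 2 • h p.1 + s • p.2) = ρ) :
    ∫ y, h y ∂ρ = 0 := by
  have hhi : Integrable h ρ := (hρ.norm.const_mul K).mono' hh.aestronglyMeasurable
    (ae_of_all _ hK)
  have hm : Measurable fun p : E × E => p.1 + s ^ 2 • h p.1 + s • p.2 :=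
    (by fun_prop : Continuous fun p : E × E => p.1 + s ^ 2 • h p.1 + s • p.2).measurable
  have key : ∫ y, y ∂ρ = ∫ y, y ∂ρ + s ^ 2 • ∫ y, h y ∂ρ := by
    conv_lhs => rw [← hstat, integral_map (f := fun y => y) hm.aemeasurable
      continuous_id.aestronglyMeasurable]
    have i1 : Integrable (fun p : E × E => p.1) (ρ.prod νw) := hρ.comp_fst νw
    have i2 : Integrable (fun p : E × E => s ^ 2 • h p.1) (ρ.prod νw) :=
      (hhi.comp_fst νw).smul (s ^ 2)
    have i3 : Integrable (fun p : E × E => s • p.2) (ρ.prod νw) := (hw.comp_snd ρ).smul s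
    have i12 : Integrable (fun p : E × E => p.1 + s ^ 2 • h p.1) (ρ.prod νw) := i1.add i2
    rw [integral_add i12 i3, integral_add i1 i2, integral_smul, integral_smul,
      integral_fun_fst (fun y : E => y), integral_fun_fst h, integral_fun_snd (fun y : E => y),
      hmean]
    simp
  have h0 : s ^ 2 • ∫ y, h y ∂ρ = 0 := by simpa using key
  exact (smul_eq_zero.1 h0).resolve_left (pow_ne_zero 2 hs)

/-- Balance of second moments in the direction `z` under a stationary law of
`y ↦ y + s² h(y) + s w`. -/
theorem second_moment_balance (hh : Continuous h) (hK : ∀ y, ‖h y‖ ≤ K * ‖y‖)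
    (hs : s ≠ 0) (hρ2 : Integrable (fun y : E => ‖y‖ ^ 2) ρ)
    (hw : Integrable (fun y : E => y) νw) (hw2 : Integrable (fun y : E => ‖y‖ ^ 2) νw)
    (hmean : ∫ w, w ∂νw = 0) [CompleteSpace E]
    (hstat : (ρ.prod νw).map (fun p => p.1 + s ^ 2 • h p.1 + s • p.2) = ρ) (z : E) :
    ∫ w, (inner ℝ z w) ^ 2 ∂νw =
      - ∫ y, (2 * (inner ℝ z y * inner ℝ z (h y)) + s ^ 2 * (inner ℝ z (h y)) ^ 2) ∂ρ := by
  have hρ : Integrable (fun y : E => y) ρ := integrable_id_of_sq hρ2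
  have hhi : Integrable h ρ := (hρ.norm.const_mul K).mono' hh.aestronglyMeasurable
    (ae_of_all _ hK)
  have bnd : ∀ x y : E, |inner ℝ x y| ≤ ‖x‖ * ‖y‖ := abs_real_inner_le_norm
  have iu2 : Integrable (fun y : E => (inner ℝ z y) ^ 2) ρ := by
    refine (hρ2.const_mul (‖z‖ ^ 2)).mono'
      (by fun_prop : Continuous fun y : E => (inner ℝ z y) ^ 2).aestronglyMeasurable
      (ae_of_all _ fun y => ?_)
    rw [Real.norm_eq_abs, abs_pow, ← mul_pow]
    gcongr
    exact bnd z y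
  have iw2 : Integrable (fun y : E => (inner ℝ z y) ^ 2) νw := by
    refine (hw2.const_mul (‖z‖ ^ 2)).mono'
      (by fun_prop : Continuous fun y : E => (inner ℝ z y) ^ 2).aestronglyMeasurable
      (ae_of_all _ fun y => ?_)
    rw [Real.norm_eq_abs, abs_pow, ← mul_pow]
    gcongr
    exact bnd z y
  have hzh : ∀ y, |inner ℝ z (h y)| ≤ ‖z‖ * (K * ‖y‖) := fun y =>
    (bnd z (h y)).trans (by gcongr; exact hK y)
  have iv2 : Integrable (fun y : E => (inner ℝ z (h y)) ^ 2) ρ := by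
    refine (hρ2.const_mul ((‖z‖ * K) ^ 2)).mono'
      (by fun_prop : Continuous fun y : E => (inner ℝ z (h y)) ^ 2).aestronglyMeasurable
      (ae_of_all _ fun y => ?_)
    rw [Real.norm_eq_abs, abs_pow, ← mul_pow, mul_assoc]
    gcongr
    exact hzh y
  have iuv : Integrable (fun y : E => inner ℝ z y * inner ℝ z (h y)) ρ := by
    refine (iu2.add iv2).mono'
      (by fun_prop : Continuous fun y : E => inner ℝ z y * inner ℝ z (h y)).aestronglyMeasurable
      (ae_of_all _ fun y => ?_)
    rw [Real.norm_eq_abs, abs_mul]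
    simp only [Pi.add_apply]
    nlinarith [sq_abs (inner ℝ z y), sq_abs (inner ℝ z (h y)),
      sq_nonneg (|inner ℝ z y| - |inner ℝ z (h y)|), sq_nonneg (inner ℝ z y),
      sq_nonneg (inner ℝ z (h y))]
  have hm : Measurable fun p : E × E => p.1 + s ^ 2 • h p.1 + s • p.2 :=
    (by fun_prop : Continuous fun p : E × E => p.1 + s ^ 2 • h p.1 + s • p.2).measurable
  set A : E → ℝ := fun y => 2 * (inner ℝ z y * inner ℝ z (h y)) + s ^ 2 * (inner ℝ z (h y)) ^ 2
    with hA
  have iA : Integrable A ρ := (iuv.const_mul 2).add (iv2.const_mul (s ^ 2))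
  set B : E → ℝ := fun y => 2 * s * (inner ℝ z y + s ^ 2 * inner ℝ z (h y)) with hB
  have iB : Integrable B ρ :=
    ((hρ.const_inner z).add ((hhi.const_inner z).const_mul (s ^ 2))).const_mul (2 * s)
  have iw : Integrable (fun w : E => inner ℝ z w) νw := hw.const_inner z
  have hwm : ∫ w, inner ℝ z w ∂νw = 0 := by
    rw [integral_inner hw, hmean, inner_zero_right]
  have key : ∫ y, (inner ℝ z y) ^ 2 ∂ρ =
      ∫ y, (inner ℝ z y) ^ 2 ∂ρ + s ^ 2 * ∫ y, A y ∂ρ + s ^ 2 * ∫ w, (inner ℝ z w) ^ 2 ∂νw := by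
    conv_lhs => rw [← hstat, integral_map hm.aemeasurable
      (by fun_prop : Continuous fun y : E => (inner ℝ z y) ^ 2).aestronglyMeasurable]
    have expand : ∀ p : E × E, (inner ℝ z (p.1 + s ^ 2 • h p.1 + s • p.2)) ^ 2 =
        (inner ℝ z p.1) ^ 2 + s ^ 2 * A p.1 + B p.1 * inner ℝ z p.2
          + s ^ 2 * (inner ℝ z p.2) ^ 2 := by
      intro p
      simp only [hA, hB, inner_add_right, real_inner_smul_right]
      ring
    simp_rw [expand]
    have j1 : Integrable (fun p : E × E => (inner ℝ z p.1) ^ 2) (ρ.prod νw) := iu2.comp_fst νw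
    have j2 : Integrable (fun p : E × E => s ^ 2 * A p.1) (ρ.prod νw) :=
      (iA.comp_fst νw).const_mul _
    have j3 : Integrable (fun p : E × E => B p.1 * inner ℝ z p.2) (ρ.prod νw) := iB.mul_prod iw
    have j4 : Integrable (fun p : E × E => s ^ 2 * (inner ℝ z p.2) ^ 2) (ρ.prod νw) :=
      (iw2.comp_snd ρ).const_mul _
    have j12 : Integrable (fun p : E × E => (inner ℝ z p.1) ^ 2 + s ^ 2 * A p.1) (ρ.prod νw) :=
      j1.add j2
    have j123 : Integrable (fun p : E × E => (inner ℝ z p.1) ^ 2 + s ^ 2 * A p.1 +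
        B p.1 * inner ℝ z p.2) (ρ.prod νw) := j12.add j3
    rw [integral_add j123 j4, integral_add j12 j3, integral_add j1 j2,
      integral_prod_mul, hwm, integral_const_mul (s ^ 2) (fun p : E × E => A p.1),
      integral_const_mul (s ^ 2) (fun p : E × E => (inner ℝ z p.2) ^ 2),
      integral_fun_fst (fun y : E => (inner ℝ z y) ^ 2), integral_fun_fst A,
      integral_fun_snd (fun y : E => (inner ℝ z y) ^ 2)]
    simp
  have hs2 : s ^ 2 ≠ 0 := pow_ne_zero 2 hs
  have : s ^ 2 * (∫ y, A y ∂ρ + ∫ w, (inner ℝ z w) ^ 2 ∂νw) = 0 := by linarith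
  have := (mul_eq_zero.1 this).resolve_left hs2
  linarith

end Stationary

section Rescaling

variable {E : Type*} [NormedAddCommGroup E] [NormedSpace ℝ E]

/-- Centering at `θ` and rescaling by `s⁻¹` turns a stationary law of the stochastic
approximation step with stepsize `s²` into a stationary law of the rescaled recursion. -/
theorem stationary_rescale [MeasurableSpace E] [BorelSpace E] [SecondCountableTopology E]
    {μ νw : Measure E} [IsProbabilityMeasure μ] [IsProbabilityMeasure νw]
    {T : E → E} (hT : Continuous T) (θ : E) {s : ℝ} (hs : s ≠ 0)
    (hstat : (μ.prod νw).map (fun p => p.1 + s ^ 2 • (T p.1 - p.1 + p.2)) = μ) :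
    ((μ.map fun x => s⁻¹ • (x - θ)).prod νw).map
      (fun p => p.1 + s ^ 2 • (s⁻¹ • (T (θ + s • p.1) - θ) - p.1) + s • p.2) =
      μ.map fun x => s⁻¹ • (x - θ) := by
  have hφ : Measurable fun x : E => s⁻¹ • (x - θ) :=
    (by fun_prop : Continuous fun x : E => s⁻¹ • (x - θ)).measurable
  have hstep : Measurable fun p : E × E => p.1 + s ^ 2 • (T p.1 - p.1 + p.2) :=
    (by fun_prop : Continuous fun p : E × E => p.1 + s ^ 2 • (T p.1 - p.1 + p.2)).measurable
  have hstep' : Measurable fun p : E × E =>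
      p.1 + s ^ 2 • (s⁻¹ • (T (θ + s • p.1) - θ) - p.1) + s • p.2 :=
    (by fun_prop : Continuous fun p : E × E =>
      p.1 + s ^ 2 • (s⁻¹ • (T (θ + s • p.1) - θ) - p.1) + s • p.2).measurable
  have hprod : (μ.map fun x => s⁻¹ • (x - θ)).prod νw =
      (μ.prod νw).map (Prod.map (fun x => s⁻¹ • (x - θ)) id) := by
    rw [← Measure.map_prod_map μ νw hφ measurable_id, Measure.map_id]
  conv_rhs => rw [← hstat]
  rw [hprod, Measure.map_map hstep' (hφ.prodMap measurable_id), Measure.map_map hφ hstep]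
  congr 1
  funext p
  have hx : θ + s • s⁻¹ • (p.1 - θ) = p.1 := by
    rw [smul_inv_smul₀ hs, add_sub_cancel]
  simp only [Function.comp_apply, Prod.map_fst, Prod.map_snd, id, hx]
  have h2 : s • p.2 = s⁻¹ • s ^ 2 • p.2 := by
    rw [smul_smul]
    congr 1
    field_simp
  rw [h2]
  module

/-- A positively homogeneous function composed with a map differentiable at `0`
has the expected one-sided directional derivatives. -/
theorem tendsto_rescaled_of_decomposable {G : Type*} [NormedAddCommGroup G] [NormedSpace ℝ G]
    {T : E → E} {θ : E}
    {g : G → E} {F : E → G} {ε : ℝ} (hε : 0 < ε) (hg : Continuous g)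
    (hghom : ∀ r : ℝ, 0 ≤ r → ∀ x, g (r • x) = r • g x) (hF0 : F 0 = 0)
    (hF : DifferentiableAt ℝ F 0)
    (hdec : ∀ x ∈ Metric.ball θ ε, T x = θ + g (F (x - θ))) (y : E) :
    Tendsto (fun s : ℝ => s⁻¹ • (T (θ + s • y) - θ)) (𝓝[>] 0) (𝓝 (g (fderiv ℝ F 0 y))) := by
  have h1 : Tendsto (fun s : ℝ => s⁻¹ • (F (0 + s • y) - F 0)) (𝓝[>] 0) (𝓝 (fderiv ℝ F 0 y)) :=
    (hF.hasFDerivAt.hasLineDerivAt y).tendsto_slope_zero_right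
  refine ((hg.tendsto _).comp h1).congr' ?_
  have h2 : Tendsto (fun s : ℝ => θ + s • y) (𝓝[>] 0) (𝓝 θ) := by
    have : Continuous fun s : ℝ => θ + s • y := by fun_prop
    simpa using (this.tendsto 0).mono_left nhdsWithin_le_nhds
  filter_upwards [self_mem_nhdsWithin, h2 (Metric.ball_mem_nhds θ hε)] with s hs hball
  have hs0 : (0 : ℝ) ≤ s⁻¹ := inv_nonneg.2 (le_of_lt hs)
  rw [hdec _ hball]
  simp [hF0, hghom _ hs0]

/-- A positively homogeneous function that is differentiable at `0` is linear. -/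
theorem eq_fderiv_of_homogeneous {G : Type*} [NormedAddCommGroup G] [NormedSpace ℝ G]
    {g : G → E} (hghom : ∀ r : ℝ, 0 ≤ r → ∀ x, g (r • x) = r • g x)
    (hg : DifferentiableAt ℝ g 0) (x : G) : g x = fderiv ℝ g 0 x := by
  have h0 : g 0 = 0 := by simpa using hghom 0 le_rfl 0
  have h1 : Tendsto (fun s : ℝ => s⁻¹ • (g (0 + s • x) - g 0)) (𝓝[>] 0) (𝓝 (fderiv ℝ g 0 x)) :=
    (hg.hasFDerivAt.hasLineDerivAt x).tendsto_slope_zero_right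
  refine tendsto_nhds_unique (tendsto_const_nhds.congr' ?_) h1
  filter_upwards [self_mem_nhdsWithin] with s hs
  have hs : 0 < s := hs
  rw [h0, sub_zero, zero_add, hghom s hs.le, inv_smul_smul₀ hs.ne']

end Rescaling

section Limits

variable {E : Type*} [NormedAddCommGroup E] [MeasurableSpace E]
  [BorelSpace E] {ρ : ℝ → Measure E} {ν : Measure E}

/-- If `ρ α → ν` in the quadratic Wasserstein sense and the uniformly Lipschitz maps `τ α`
converge pointwise to `ψ`, then the identities `∫ τ α = ∫ id` pass to the limit. -/
theorem integral_eq_of_tendsto_coupling [NormedSpace ℝ E] [CompleteSpace E]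
    [SecondCountableTopology E] [IsProbabilityMeasure ν]
    (hν2 : Integrable (fun y : E => ‖y‖ ^ 2) ν)
    (hcoup : ∀ η > 0, ∀ᶠ α in 𝓝[>] (0 : ℝ), ∃ π : Measure (E × E), IsProbabilityMeasure π ∧
      IsCoupling π (ρ α) ν ∧ Integrable (fun p => ‖p.1 - p.2‖ ^ 2) π ∧
      ∫ p, ‖p.1 - p.2‖ ^ 2 ∂π ≤ η ^ 2)
    {τ : ℝ → E → E} {ψ : E → E} {L : ℝ} (hL : 0 ≤ L)
    (hτ : ∀ α x y, ‖τ α x - τ α y‖ ≤ L * ‖x - y‖) (hτ0 : ∀ α, τ α 0 = 0)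
    (hlim : ∀ y, Tendsto (fun α => τ α y) (𝓝[>] 0) (𝓝 (ψ y)))
    (hmean : ∀ᶠ α in 𝓝[>] (0 : ℝ), ∫ y, (τ α y - y) ∂ρ α = 0) :
    ∫ y, ψ y ∂ν = ∫ y, y ∂ν := by
  have hν1 : Integrable (fun y : E => y) ν := integrable_id_of_sq hν2
  have hτc : ∀ α, Continuous (τ α) := fun α =>
    (LipschitzWith.of_dist_le' fun x y => by
      simpa only [dist_eq_norm] using hτ α x y : LipschitzWith (Real.toNNReal L) (τ α)).continuous
  have hτb : ∀ α y, ‖τ α y‖ ≤ L * ‖y‖ := fun α y => by simpa [hτ0] using hτ α y 0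
  have hτi : ∀ α, Integrable (τ α) ν := fun α =>
    (hν1.norm.const_mul L).mono' (hτc α).aestronglyMeasurable (ae_of_all _ (hτb α))
  have h1 : Tendsto (fun α => ∫ y, τ α y ∂ν) (𝓝[>] 0) (𝓝 (∫ y, ψ y ∂ν)) :=
    tendsto_integral_filter_of_dominated_convergence (fun y => L * ‖y‖)
      (Eventually.of_forall fun α => (hτc α).aestronglyMeasurable)
      (Eventually.of_forall fun α => ae_of_all _ (hτb α)) (hν1.norm.const_mul L)
      (ae_of_all _ hlim)
  have h2 : ∀ η > 0, ‖∫ y, ψ y ∂ν - ∫ y, y ∂ν‖ ≤ (L + 1) * η := by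
    intro η hη
    refine le_of_tendsto (h1.sub_const _).norm ?_
    filter_upwards [hcoup η hη, hmean] with α hα hm
    obtain ⟨π, hπ, ⟨hfst, hsnd⟩, hi, hle⟩ := hα
    set D : E → E := fun y => τ α y - y with hD
    have hDc : Continuous D := (hτc α).sub continuous_id
    have hDL : ∀ x y, ‖D x - D y‖ ≤ (L + 1) * ‖x - y‖ := fun x y => by
      have : D x - D y = (τ α x - τ α y) - (x - y) := by simp only [hD]; abel
      rw [this]
      linarith [norm_sub_le (τ α x - τ α y) (x - y), hτ α x y]
    have hDν : Integrable D ν := (hτi α).sub hν1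
    have hD2 : Integrable (fun p : E × E => D p.2) π := by
      rw [← hsnd] at hDν
      exact hDν.comp_measurable measurable_snd
    have hab : ∀ p : E × E, ‖D p.1 - D p.2‖ ≤
        (L + 1) * (η / 2 + (2 * η)⁻¹ * ‖p.1 - p.2‖ ^ 2) := fun p => by
      refine (hDL p.1 p.2).trans ?_
      gcongr
      have : η / 2 + (2 * η)⁻¹ * ‖p.1 - p.2‖ ^ 2 - ‖p.1 - p.2‖ =
          (2 * η)⁻¹ * (‖p.1 - p.2‖ - η) ^ 2 := by field_simp; ring
      have h0 : 0 ≤ (2 * η)⁻¹ * (‖p.1 - p.2‖ - η) ^ 2 := by positivity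
      linarith
    have hbi : Integrable (fun p : E × E => (L + 1) * (η / 2 + (2 * η)⁻¹ * ‖p.1 - p.2‖ ^ 2)) π :=
      ((integrable_const _).add (hi.const_mul _)).const_mul _
    have hDD : Integrable (fun p : E × E => D p.1 - D p.2) π :=
      hbi.mono' (by fun_prop : Continuous fun p : E × E => D p.1 - D p.2).aestronglyMeasurable
        (ae_of_all _ hab)
    have hD1 : Integrable (fun p : E × E => D p.1) π :=
      (hDD.add hD2).congr (ae_of_all _ fun p => by simp)
    have e1 : ∫ p, D p.1 ∂π = 0 := by
      rw [← hm, ← hfst, integral_map measurable_fst.aemeasurable hDc.aestronglyMeasurable]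
    have e2 : ∫ p, D p.2 ∂π = ∫ y, τ α y ∂ν - ∫ y, y ∂ν := by
      rw [← integral_sub (hτi α) hν1]
      conv_rhs => rw [← hsnd]
      rw [integral_map measurable_snd.aemeasurable hDc.aestronglyMeasurable]
    have e3 : ∫ p, (D p.1 - D p.2) ∂π = -(∫ y, τ α y ∂ν - ∫ y, y ∂ν) := by
      rw [integral_sub hD1 hD2, e1, e2, zero_sub]
    rw [← norm_neg, ← e3]
    refine (norm_integral_le_of_norm_le hbi (ae_of_all _ hab)).trans ?_
    rw [integral_const_mul, integral_add (integrable_const _) (hi.const_mul _),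
      integral_const_mul, integral_const]
    simp only [probReal_univ, one_smul]
    gcongr
    calc η / 2 + (2 * η)⁻¹ * ∫ p, ‖p.1 - p.2‖ ^ 2 ∂π ≤ η / 2 + (2 * η)⁻¹ * η ^ 2 := by gcongr
      _ = η := by field_simp; ring
  have h3 : ‖∫ y, ψ y ∂ν - ∫ y, y ∂ν‖ ≤ 0 := by
    refine le_of_forall_pos_le_add fun η hη => ?_
    have := h2 (η / (L + 1)) (by positivity)
    rwa [mul_div_cancel₀ _ (by positivity), ← zero_add η] at this
  exact sub_eq_zero.1 (norm_le_zero_iff.1 h3)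

/-- If the limiting law is concentrated on the hyperplane orthogonal to `z`, then the noise
has no variance in the direction `z`. -/
theorem noise_variance_nonpos_of_ae_inner_eq_zero [InnerProductSpace ℝ E]
    (hν2 : Integrable (fun y : E => ‖y‖ ^ 2) ν)
    (hcoup : ∀ η > 0, ∀ᶠ α in 𝓝[>] (0 : ℝ), ∃ π : Measure (E × E), IsProbabilityMeasure π ∧
      IsCoupling π (ρ α) ν ∧ Integrable (fun p => ‖p.1 - p.2‖ ^ 2) π ∧
      ∫ p, ‖p.1 - p.2‖ ^ 2 ∂π ≤ η ^ 2)
    {h : ℝ → E → E} {K : ℝ} (hK0 : 0 ≤ K) (hh : ∀ α, Continuous (h α))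
    (hK : ∀ α y, ‖h α y‖ ≤ K * ‖y‖) (z : E) {V : ℝ}
    (hbal : ∀ᶠ α in 𝓝[>] (0 : ℝ), V =
      - ∫ y, (2 * (inner ℝ z y * inner ℝ z (h α y)) + α * (inner ℝ z (h α y)) ^ 2) ∂ρ α)
    (hz : ∀ᵐ y ∂ν, inner ℝ z y = 0) : V ≤ 0 := by
  set Z := ‖z‖ ^ 2 with hZ
  set M := ∫ y, ‖y‖ ^ 2 ∂ν with hM
  have hZ0 : 0 ≤ Z := by positivity
  have hM0 : 0 ≤ M := integral_nonneg fun y => by positivity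
  set C := Z * K + (Z * K + Z * K ^ 2) * (2 + 2 * M) with hC
  have main : ∀ η, 0 < η → η ≤ 1 → V ≤ C * η := by
    intro η hη hη1
    have hsmall : ∀ᶠ α in 𝓝[>] (0 : ℝ), α < η :=
      (eventually_lt_nhds hη).filter_mono nhdsWithin_le_nhds
    obtain ⟨α, ⟨π, hπ, ⟨hfst, hsnd⟩, hi, hle⟩, hV, hαη, hα0⟩ :=
      ((hcoup η hη).and (hbal.and (hsmall.and self_mem_nhdsWithin))).exists
    have hα0 : 0 < α := hα0
    set q : E → ℝ := fun y => 2 * (inner ℝ z y * inner ℝ z (h α y)) + α * (inner ℝ z (h α y)) ^ 2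
      with hq
    have hqc : Continuous q := by
      have := hh α
      fun_prop
    have e1 : V = - ∫ p, q p.1 ∂π := by
      rw [hV, ← hfst, integral_map measurable_fst.aemeasurable hqc.aestronglyMeasurable]
    have hz' : ∀ᵐ p ∂π, inner ℝ z p.2 = 0 := by
      rw [← hsnd] at hz
      exact ae_of_ae_map measurable_snd.aemeasurable hz
    have i2 : Integrable (fun p : E × E => ‖p.2‖ ^ 2) π := by
      rw [← hsnd] at hν2
      exact hν2.comp_measurable measurable_snd
    have e2 : ∫ p, ‖p.2‖ ^ 2 ∂π = M := by
      rw [hM, ← hsnd, integral_map measurable_snd.aemeasurable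
        (by fun_prop : Continuous fun y : E => ‖y‖ ^ 2).aestronglyMeasurable]
    set R : ℝ := Z * K * η⁻¹ + η * (Z * K + Z * K ^ 2) * 2 with hR
    set S : ℝ := η * (Z * K + Z * K ^ 2) * 2 with hS
    have ib : Integrable (fun p : E × E => R * ‖p.1 - p.2‖ ^ 2 + S * ‖p.2‖ ^ 2) π :=
      (hi.const_mul R).add (i2.const_mul S)
    have hb : ∀ᵐ p ∂π, ‖q p.1‖ ≤ R * ‖p.1 - p.2‖ ^ 2 + S * ‖p.2‖ ^ 2 := by
      filter_upwards [hz'] with p hp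
      have b1 : |inner ℝ z p.1| ≤ ‖z‖ * ‖p.1 - p.2‖ := by
        have := abs_real_inner_le_norm z (p.1 - p.2)
        rwa [inner_sub_right, hp, sub_zero] at this
      have b2 : |inner ℝ z (h α p.1)| ≤ ‖z‖ * (K * ‖p.1‖) :=
        (abs_real_inner_le_norm _ _).trans (by gcongr; exact hK α p.1)
      have b3 : ‖p.1‖ ^ 2 ≤ 2 * ‖p.1 - p.2‖ ^ 2 + 2 * ‖p.2‖ ^ 2 := by
        have h1 : ‖p.1‖ ≤ ‖p.1 - p.2‖ + ‖p.2‖ := by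
          simpa using norm_add_le (p.1 - p.2) p.2
        have h2 : ‖p.1‖ ^ 2 ≤ (‖p.1 - p.2‖ + ‖p.2‖) ^ 2 := by gcongr
        nlinarith [sq_nonneg (‖p.1 - p.2‖ - ‖p.2‖)]
      have b4 : 2 * (‖p.1 - p.2‖ * ‖p.1‖) ≤ η⁻¹ * ‖p.1 - p.2‖ ^ 2 + η * ‖p.1‖ ^ 2 := by
        have : η⁻¹ * ‖p.1 - p.2‖ ^ 2 + η * ‖p.1‖ ^ 2 - 2 * (‖p.1 - p.2‖ * ‖p.1‖) =
            η⁻¹ * (‖p.1 - p.2‖ - η * ‖p.1‖) ^ 2 := by field_simp; ring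
        have h0 : 0 ≤ η⁻¹ * (‖p.1 - p.2‖ - η * ‖p.1‖) ^ 2 := by positivity
        linarith
      calc ‖q p.1‖ ≤ 2 * (|inner ℝ z p.1| * |inner ℝ z (h α p.1)|) +
            α * |inner ℝ z (h α p.1)| ^ 2 := by
            rw [Real.norm_eq_abs]
            refine (abs_add_le _ _).trans (le_of_eq ?_)
            rw [abs_mul, abs_mul, abs_mul, abs_two, abs_of_pos hα0, abs_pow]
        _ ≤ 2 * ((‖z‖ * ‖p.1 - p.2‖) * (‖z‖ * (K * ‖p.1‖))) + η * (‖z‖ * (K * ‖p.1‖)) ^ 2 := by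
            gcongr
        _ = Z * K * (2 * (‖p.1 - p.2‖ * ‖p.1‖)) + η * (Z * K ^ 2) * ‖p.1‖ ^ 2 := by
            rw [hZ]; ring
        _ ≤ Z * K * (η⁻¹ * ‖p.1 - p.2‖ ^ 2 + η * ‖p.1‖ ^ 2) + η * (Z * K ^ 2) * ‖p.1‖ ^ 2 := by
            gcongr
        _ = Z * K * η⁻¹ * ‖p.1 - p.2‖ ^ 2 + η * (Z * K + Z * K ^ 2) * ‖p.1‖ ^ 2 := by ring
        _ ≤ Z * K * η⁻¹ * ‖p.1 - p.2‖ ^ 2 + η * (Z * K + Z * K ^ 2) *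
              (2 * ‖p.1 - p.2‖ ^ 2 + 2 * ‖p.2‖ ^ 2) := by gcongr
        _ = _ := by rw [hR, hS]; ring
    calc V ≤ ‖∫ p, q p.1 ∂π‖ := by
          rw [e1, Real.norm_eq_abs]
          exact neg_le_abs _
      _ ≤ ∫ p, (R * ‖p.1 - p.2‖ ^ 2 + S * ‖p.2‖ ^ 2) ∂π := norm_integral_le_of_norm_le ib hb
      _ = R * ∫ p, ‖p.1 - p.2‖ ^ 2 ∂π + S * M := by
          rw [integral_add (hi.const_mul R) (i2.const_mul S), integral_const_mul,
            integral_const_mul, e2]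
      _ ≤ R * η ^ 2 + S * M := by gcongr
      _ = Z * K * η + (Z * K + Z * K ^ 2) * (2 * η ^ 2 + 2 * M) * η := by
          rw [hR, hS]; field_simp; ring
      _ ≤ Z * K * η + (Z * K + Z * K ^ 2) * (2 * 1 + 2 * M) * η := by
          gcongr
          exact pow_le_one₀ hη.le hη1
      _ = C * η := by rw [hC]; ring
  have hlim : Tendsto (fun η : ℝ => C * η) (𝓝[>] 0) (𝓝 0) := by
    have : Continuous fun η : ℝ => C * η := by fun_prop
    simpa using (this.tendsto 0).mono_left nhdsWithin_le_nhds
  refine ge_of_tendsto hlim ?_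
  filter_upwards [Ioc_mem_nhdsGT (zero_lt_one' ℝ)] with η hη
  exact main η hη.1 hη.2

end Limits

theorem stmt_7 {d m : ℕ} (γ : ℝ) (hγ : γ ∈ Set.Ioo (0:ℝ) 1)
    (c : EuclideanSpace ℝ (Fin d) → ℝ) (hc : IsNormLike c)
    (T : EuclideanSpace ℝ (Fin d) → EuclideanSpace ℝ (Fin d))
    (hT : ∀ θ θ', c (T θ - T θ') ≤ γ * c (θ - θ'))
    (θstar : EuclideanSpace ℝ (Fin d)) (hfix : T θstar = θstar)
    -- g∘F decomposability of T at θstar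
    (g : EuclideanSpace ℝ (Fin m) → EuclideanSpace ℝ (Fin d))
    (F : EuclideanSpace ℝ (Fin d) → EuclideanSpace ℝ (Fin m))
    (ε : ℝ) (hε : 0 < ε)
    (hgcont : Continuous g)
    (hghom : ∀ r : ℝ, 0 ≤ r → ∀ x, g (r • x) = r • g x)
    (hF0 : F 0 = 0)
    (hFdiff : ∀ x ∈ Metric.ball (0 : EuclideanSpace ℝ (Fin d)) ε, DifferentiableAt ℝ F x)
    (hFderiv : ContinuousAt (fderiv ℝ F) 0)
    (hdecomp : ∀ θ ∈ Metric.ball θstar ε, T θ = θstar + g (F (θ - θstar)))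
    -- i.i.d. zero-mean noise with finite fourth moment, given by its law νw
    (νw : Measure (EuclideanSpace ℝ (Fin d))) [IsProbabilityMeasure νw]
    (hνint : Integrable (fun x : EuclideanSpace ℝ (Fin d) => x) νw)
    (hνmean : ∫ x, x ∂νw = 0)
    (hν4 : Integrable (fun x : EuclideanSpace ℝ (Fin d) => ‖x‖ ^ 4) νw)
    -- the stationary distributions μ α for small α
    (α₁ : ℝ) (hα₁ : 0 < α₁) (μ : ℝ → Measure (EuclideanSpace ℝ (Fin d)))
    (hμ : ∀ α ∈ Set.Ioc (0:ℝ) α₁, IsProbabilityMeasure (μ α) ∧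
      Integrable (fun x : EuclideanSpace ℝ (Fin d) => ‖x‖ ^ 2) (μ α) ∧
      saStep T α νw (μ α) = μ α)
    -- the steady-state limit ν
    (ν : Measure (EuclideanSpace ℝ (Fin d))) (hνprob : IsProbabilityMeasure ν)
    (hν2 : Integrable (fun x : EuclideanSpace ℝ (Fin d) => ‖x‖ ^ 2) ν)
    (hνlim : Tendsto (fun α : ℝ =>
        W2dist c (Measure.map (fun x => (Real.sqrt α)⁻¹ • (x - θstar)) (μ α)) ν)
      (𝓝[>] 0) (𝓝 0)) :
    -- (1) smooth case: the limit has zero mean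
    (((∃ δ > 0, (∀ x ∈ Metric.ball (0 : EuclideanSpace ℝ (Fin m)) δ,
          DifferentiableAt ℝ g x) ∧ ContinuousAt (fderiv ℝ g) 0) ∨
        fderiv ℝ F 0 = 0) →
      (∫ y, y ∂ν) = 0) ∧
    -- (2) genuinely nonsmooth case: the limit has nonzero mean
    ((∀ z : EuclideanSpace ℝ (Fin d), z ≠ 0 → 0 < ∫ x, (@inner ℝ _ _ z x) ^ 2 ∂νw) →
      (∃ i : Fin d, ∃ z₁ z₂ : EuclideanSpace ℝ (Fin d), z₁ ≠ z₂ ∧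
        (((∀ x, @inner ℝ _ _ z₁ x ≤ g (fderiv ℝ F 0 x) i) ∧
          (∀ x, @inner ℝ _ _ z₂ x ≤ g (fderiv ℝ F 0 x) i)) ∨
         ((∀ x, g (fderiv ℝ F 0 x) i ≤ @inner ℝ _ _ z₁ x) ∧
          (∀ x, g (fderiv ℝ F 0 x) i ≤ @inner ℝ _ _ z₂ x)))) →
      (∫ y, y ∂ν) ≠ 0) := by
  have hγ0 : 0 < γ := hγ.1
  have hγ1 : γ < 1 := hγ.2
  obtain ⟨a, ha, hca⟩ := hc.exists_norm_le
  obtain ⟨b, hb, hcb⟩ := hc.exists_le_norm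
  set L : ℝ := a * γ * b with hLdef
  have hL0 : 0 ≤ L := by positivity
  have hTL : ∀ x y, ‖T x - T y‖ ≤ L * ‖x - y‖ := fun x y =>
    calc ‖T x - T y‖ ≤ a * (γ * (b * ‖x - y‖)) := (hca _).trans <| by
          gcongr
          exact (hT x y).trans (by gcongr; exact hcb _)
      _ = L * ‖x - y‖ := by rw [hLdef]; ring
  have hTc : Continuous T :=
    (LipschitzWith.of_dist_le' fun x y => by
      simpa only [dist_eq_norm] using hTL x y : LipschitzWith (Real.toNNReal L) T).continuous
  set ρ : ℝ → Measure (EuclideanSpace ℝ (Fin d)) := fun α =>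
    Measure.map (fun x => (Real.sqrt α)⁻¹ • (x - θstar)) (μ α) with hρ
  set τ : ℝ → EuclideanSpace ℝ (Fin d) → EuclideanSpace ℝ (Fin d) := fun α y =>
    (Real.sqrt α)⁻¹ • (T (θstar + Real.sqrt α • y) - θstar) with hτdef
  set ψ : EuclideanSpace ℝ (Fin d) → EuclideanSpace ℝ (Fin d) := fun y =>
    g (fderiv ℝ F 0 y) with hψ
  have hτ : ∀ α x y, ‖τ α x - τ α y‖ ≤ L * ‖x - y‖ := by
    intro α x y
    rcases (Real.sqrt_nonneg α).eq_or_lt with h0 | hpos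
    · simp only [hτdef, ← h0, inv_zero, zero_smul, sub_zero, norm_zero]
      positivity
    · have e : τ α x - τ α y = (Real.sqrt α)⁻¹ •
          (T (θstar + Real.sqrt α • x) - T (θstar + Real.sqrt α • y)) := by
        simp only [hτdef]
        module
      rw [e, norm_smul, norm_inv, Real.norm_of_nonneg hpos.le, inv_mul_le_iff₀ hpos]
      refine (hTL _ _).trans (le_of_eq ?_)
      rw [add_sub_add_left_eq_sub, ← smul_sub, norm_smul, Real.norm_of_nonneg hpos.le]
      ring
  have hτ0 : ∀ α, τ α 0 = 0 := fun α => by simp [hτdef, hfix]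
  have hτc : ∀ α, Continuous (τ α) := fun α => by
    simp only [hτdef]
    fun_prop
  have hτb : ∀ α y, ‖τ α y‖ ≤ L * ‖y‖ := fun α y => by simpa [hτ0] using hτ α y 0
  have hsqrt : Tendsto Real.sqrt (𝓝[>] 0) (𝓝[>] 0) := by
    refine tendsto_nhdsWithin_iff.2 ⟨?_, ?_⟩
    · simpa using (Real.continuous_sqrt.tendsto 0).mono_left nhdsWithin_le_nhds
    · filter_upwards [self_mem_nhdsWithin] with α hα using Real.sqrt_pos.2 hα
  have hlim : ∀ y, Tendsto (fun α => τ α y) (𝓝[>] 0) (𝓝 (ψ y)) := fun y =>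
    (tendsto_rescaled_of_decomposable hε hgcont hghom hF0
      (hFdiff 0 (Metric.mem_ball_self hε)) hdecomp y).comp hsqrt
  have hgood : ∀ᶠ α in 𝓝[>] (0 : ℝ), α ∈ Set.Ioc 0 α₁ := Ioc_mem_nhdsGT hα₁
  have hφm : ∀ α : ℝ, Continuous fun x : EuclideanSpace ℝ (Fin d) =>
      (Real.sqrt α)⁻¹ • (x - θstar) := fun α => by fun_prop
  have hρprob : ∀ α ∈ Set.Ioc 0 α₁, IsProbabilityMeasure (ρ α) := fun α hα =>
    haveI := (hμ α hα).1
    Measure.isProbabilityMeasure_map (hφm α).aemeasurable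
  have hρ2 : ∀ α ∈ Set.Ioc 0 α₁,
      Integrable (fun x : EuclideanSpace ℝ (Fin d) => ‖x‖ ^ 2) (ρ α) := by
    intro α hα
    have := (hμ α hα).1
    rw [hρ, integrable_map_measure (by fun_prop) (hφm α).aemeasurable]
    refine integrable_of_norm_le_one_add_sq (hμ α hα).2.1 (by fun_prop)
      ((Real.sqrt α)⁻¹ ^ 2 * (2 + 2 * ‖θstar‖ ^ 2)) fun x => ?_
    have h1 : ‖x - θstar‖ ^ 2 ≤ (‖x‖ + ‖θstar‖) ^ 2 := by
      gcongr
      exact norm_sub_le _ _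
    have h2 : ‖x - θstar‖ ^ 2 ≤ (2 + 2 * ‖θstar‖ ^ 2) * (1 + ‖x‖ ^ 2) := by
      nlinarith [sq_nonneg (‖x‖ - ‖θstar‖), mul_nonneg (sq_nonneg ‖x‖) (sq_nonneg ‖θstar‖)]
    rw [Function.comp_apply, Real.norm_of_nonneg (by positivity), norm_smul, norm_inv,
      Real.norm_of_nonneg (Real.sqrt_nonneg α), mul_pow, mul_assoc]
    gcongr
  have hstat : ∀ α ∈ Set.Ioc 0 α₁, ((ρ α).prod νw).map
      (fun p => p.1 + Real.sqrt α ^ 2 • (τ α p.1 - p.1) + Real.sqrt α • p.2) = ρ α := by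
    intro α hα
    obtain ⟨hp, -, hst⟩ := hμ α hα
    refine stationary_rescale hTc θstar (Real.sqrt_pos.2 hα.1).ne' ?_
    rw [Real.sq_sqrt hα.1.le]
    exact hst
  have hcoup : ∀ η > 0, ∀ᶠ α in 𝓝[>] (0 : ℝ),
      ∃ π : Measure (EuclideanSpace ℝ (Fin d) × EuclideanSpace ℝ (Fin d)),
        IsProbabilityMeasure π ∧ IsCoupling π (ρ α) ν ∧
        Integrable (fun p => ‖p.1 - p.2‖ ^ 2) π ∧ ∫ p, ‖p.1 - p.2‖ ^ 2 ∂π ≤ η ^ 2 := by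
    intro η hη
    filter_upwards [hgood, hνlim.eventually_lt_const (div_pos hη ha)] with α hα hlt
    have := hρprob α hα
    have hlt2 : W2sq c (ρ α) ν < (η / a) ^ 2 := (Real.sqrt_lt' (div_pos hη ha)).1 hlt
    obtain ⟨π, hπ, hi, hle⟩ := exists_coupling_lt_of_W2sq_lt hc (hρ2 α hα) hν2 hlt2
    have hb' : ∀ p : EuclideanSpace ℝ (Fin d) × EuclideanSpace ℝ (Fin d),
        ‖p.1 - p.2‖ ^ 2 ≤ a ^ 2 * c (p.1 - p.2) ^ 2 := fun p => by
      rw [← mul_pow]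
      gcongr
      exact hca _
    have hi' : Integrable (fun p : EuclideanSpace ℝ (Fin d) × EuclideanSpace ℝ (Fin d) =>
        ‖p.1 - p.2‖ ^ 2) π :=
      (hi.const_mul (a ^ 2)).mono' (by fun_prop) (ae_of_all _ fun p => by
        rw [Real.norm_of_nonneg (by positivity)]
        exact hb' p)
    refine ⟨π, ?_, hπ, hi', ?_⟩
    · have : IsProbabilityMeasure (π.map Prod.fst) := by rwa [hπ.1]
      exact Measure.isProbabilityMeasure_of_map Prod.fst
    · calc ∫ p, ‖p.1 - p.2‖ ^ 2 ∂π ≤ ∫ p, a ^ 2 * c (p.1 - p.2) ^ 2 ∂π :=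
            integral_mono hi' (hi.const_mul _) hb'
        _ = a ^ 2 * ∫ p, c (p.1 - p.2) ^ 2 ∂π := integral_const_mul _ _
        _ ≤ a ^ 2 * (η / a) ^ 2 := by gcongr
        _ = η ^ 2 := by field_simp
  have hdrift : ∀ α y, ‖τ α y - y‖ ≤ (L + 1) * ‖y‖ := fun α y => by
    linarith [norm_sub_le (τ α y) y, hτb α y]
  have hdriftc : ∀ α, Continuous fun y => τ α y - y := fun α => (hτc α).sub continuous_id
  have hmean : ∀ᶠ α in 𝓝[>] (0 : ℝ), ∫ y, (τ α y - y) ∂ρ α = 0 := by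
    filter_upwards [hgood] with α hα
    have := hρprob α hα
    exact integral_drift_eq_zero (hdriftc α) (hdrift α) (Real.sqrt_pos.2 hα.1).ne'
      (integrable_id_of_sq (hρ2 α hα)) hνint hνmean (hstat α hα)
  have hψmean : ∫ y, ψ y ∂ν = ∫ y, y ∂ν :=
    integral_eq_of_tendsto_coupling hν2 hcoup hL0 hτ hτ0 hlim hmean
  have hν1 : Integrable (fun y : EuclideanSpace ℝ (Fin d) => y) ν := integrable_id_of_sq hν2
  refine ⟨fun hsmooth => ?_, fun hpd hsub hzero => ?_⟩
  · obtain ⟨A, hA⟩ : ∃ A : EuclideanSpace ℝ (Fin d) →L[ℝ] EuclideanSpace ℝ (Fin d),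
        ∀ y, ψ y = A y := by
      rcases hsmooth with ⟨δ, hδ, hgd, -⟩ | hF'
      · exact ⟨(fderiv ℝ g 0).comp (fderiv ℝ F 0), fun y =>
          eq_fderiv_of_homogeneous hghom (hgd 0 (Metric.mem_ball_self hδ)) _⟩
      · refine ⟨0, fun y => ?_⟩
        simpa [hψ, hF'] using hghom 0 le_rfl 0
    have hψc : ∀ y, c (ψ y) ≤ γ * c y := by
      intro y
      refine le_of_tendsto ((hc.continuous.tendsto _).comp (hlim y)) ?_
      filter_upwards [self_mem_nhdsWithin] with α hα
      have hs : 0 < Real.sqrt α := Real.sqrt_pos.2 hα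
      have h1 := hT (θstar + Real.sqrt α • y) θstar
      rw [hfix, add_sub_cancel_left, hc.smul_eq, abs_of_pos hs] at h1
      simp only [Function.comp_apply, hτdef]
      rw [hc.smul_eq, abs_of_pos (inv_pos.2 hs), inv_mul_le_iff₀ hs]
      linarith
    have hfixed : A (∫ y, y ∂ν) = ∫ y, y ∂ν := by
      rw [← A.integral_comp_comm hν1, ← hψmean]
      exact integral_congr_ae (ae_of_all _ fun y => (hA y).symm)
    by_contra hne
    have h1 := hψc (∫ y, y ∂ν)
    rw [hA, hfixed] at h1
    nlinarith [hc.pos _ hne]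
  · obtain ⟨i, z₁, z₂, hz12, hcases⟩ := hsub
    have hψcont : Continuous ψ := hgcont.comp (fderiv ℝ F 0).continuous
    have hψb : ∀ y, ‖ψ y‖ ≤ L * ‖y‖ := fun y =>
      le_of_tendsto (hlim y).norm (Eventually.of_forall fun α => hτb α y)
    have hψi : Integrable ψ ν :=
      (hν1.norm.const_mul L).mono' hψcont.aestronglyMeasurable (ae_of_all _ hψb)
    have hψii : Integrable (fun y => ψ y i) ν :=
      (EuclideanSpace.proj (𝕜 := ℝ) i).integrable_comp hψi
    have hψ0 : ∫ y, ψ y i ∂ν = 0 := by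
      have := (EuclideanSpace.proj (𝕜 := ℝ) i).integral_comp_comm hψi
      rw [hψmean, hzero, map_zero] at this
      exact this
    have hin : ∀ z : EuclideanSpace ℝ (Fin d), ∫ y, inner ℝ z y ∂ν = 0 := fun z => by
      rw [integral_inner hν1, hzero, inner_zero_right]
    have hlower : ∀ z : EuclideanSpace ℝ (Fin d), (∀ x, inner ℝ z x ≤ ψ x i) →
        ∀ᵐ y ∂ν, inner ℝ z y = ψ y i := fun z hz =>
      (integral_eq_iff_of_ae_le (hν1.const_inner z) hψii (ae_of_all _ hz)).1
        ((hin z).trans hψ0.symm)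
    have hupper : ∀ z : EuclideanSpace ℝ (Fin d), (∀ x, ψ x i ≤ inner ℝ z x) →
        ∀ᵐ y ∂ν, ψ y i = inner ℝ z y := fun z hz =>
      (integral_eq_iff_of_ae_le hψii (hν1.const_inner z) (ae_of_all _ hz)).1
        (hψ0.trans (hin z).symm)
    have hperp : ∀ᵐ y ∂ν, inner ℝ (z₁ - z₂) y = 0 := by
      rcases hcases with ⟨h1, h2⟩ | ⟨h1, h2⟩
      · filter_upwards [hlower z₁ h1, hlower z₂ h2] with y e1 e2
        rw [inner_sub_left, e1, e2, sub_self]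
      · filter_upwards [hupper z₁ h1, hupper z₂ h2] with y e1 e2
        rw [inner_sub_left, ← e1, ← e2, sub_self]
    have hνw2 : Integrable (fun x : EuclideanSpace ℝ (Fin d) => ‖x‖ ^ 2) νw :=
      integrable_of_norm_le_one_add_sq hν4 (by fun_prop) 1 fun x => by
        rw [Real.norm_of_nonneg (by positivity)]
        nlinarith [sq_nonneg (‖x‖ ^ 2 - 1), sq_nonneg ‖x‖]
    refine absurd (hpd (z₁ - z₂) (sub_ne_zero.2 hz12)) (not_lt.2 ?_)
    refine noise_variance_nonpos_of_ae_inner_eq_zero hν2 hcoup (by positivity : 0 ≤ L + 1)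
      hdriftc hdrift (z₁ - z₂) ?_ hperp
    filter_upwards [hgood] with α hα
    have := hρprob α hα
    have hbal := second_moment_balance (hdriftc α) (hdrift α) (Real.sqrt_pos.2 hα.1).ne'
      (hρ2 α hα) hνint hνw2 hνmean (hstat α hα) (z₁ - z₂)
    rwa [Real.sq_sqrt hα.1.le] at hbal
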